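/- arXiv:1603.07890 — 2 statements merged into one kernel-verified Lean document; each statement's English description precedes it below -/
import Mathlib

section
/- The set 𝒫 of all polynomial functions on ℝⁿ, regarded as tempered distributions (via f ↦ (φ ↦ ∫_{ℝⁿ} f(x) φ(x) dx)), is a closed linear subspace of the space 𝒮′(ℝⁿ) of tempered distributions equipped with the weak-* topology. -/
open MeasureTheory
open scoped SchwartzMap FourierTransform LineDeriv Topology NNReal

namespace SchwartzMap

section Flat

variable {E F : Type*} [NormedAddCommGroup E] [NormedSpace ℝ E]
  [NormedAddCommGroup F] [NormedSpace ℝ F]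

/-- Taylor estimate for a Schwartz function whose derivatives up to order `N` vanish at `0`. -/
theorem norm_iteratedFDeriv_le_of_flat (f : 𝓢(E, F)) {N : ℕ}
    (hf : ∀ j ≤ N, iteratedFDeriv ℝ j f 0 = 0) {i j : ℕ} (hij : j + i = N + 1) (x : E) :
    ‖iteratedFDeriv ℝ j f x‖ ≤ SchwartzMap.seminorm ℝ 0 (N + 1) f * ‖x‖ ^ i := by
  induction i generalizing j x with
  | zero =>
    obtain rfl : j = N + 1 := by omega
    simpa using f.norm_iteratedFDeriv_le_seminorm ℝ (N + 1) x
  | succ i ih =>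
    have hdiff : Differentiable ℝ (iteratedFDeriv ℝ j f) :=
      (f.smooth ⊤).differentiable_iteratedFDeriv (mod_cast ENat.natCast_lt_top j)
    have hbound : ∀ y ∈ Metric.closedBall (0 : E) ‖x‖,
        ‖fderiv ℝ (iteratedFDeriv ℝ j f) y‖ ≤
          SchwartzMap.seminorm ℝ 0 (N + 1) f * ‖x‖ ^ i := by
      intro y hy
      rw [norm_fderiv_iteratedFDeriv]
      refine (ih (by omega) y).trans ?_
      have : ‖y‖ ≤ ‖x‖ := by simpa using hy
      gcongr
    have := (convex_closedBall (0 : E) ‖x‖).norm_image_sub_le_of_norm_fderiv_le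
      (fun y _ ↦ hdiff y) hbound (x := 0) (y := x) (by simp) (by simp)
    rw [hf j (by omega), sub_zero, sub_zero] at this
    rwa [pow_succ, ← mul_assoc]

theorem hasTemperateGrowth_dilation (χ : 𝓢(E, ℂ)) (a : ℝ) :
    (fun x ↦ χ (a • x)).HasTemperateGrowth :=
  χ.hasTemperateGrowth.comp (a • ContinuousLinearMap.id ℝ E).hasTemperateGrowth

variable [NormedSpace ℂ F]

/-- Multiplying a Schwartz function that is flat to order `N` at the origin by a cutoff to scale `ε`
makes its seminorms of order at most `N` as small as `ε`. -/
theorem exists_seminorm_dilation_smul_le (χ : 𝓢(E, ℂ)) (f : 𝓢(E, F)) {N : ℕ}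
    (hf : ∀ j ≤ N, iteratedFDeriv ℝ j f 0 = 0) (k : ℕ) {l : ℕ} (hl : l ≤ N) :
    ∃ C : ℝ, 0 ≤ C ∧ ∀ ε : ℝ, 0 < ε → ε ≤ 1 →
      SchwartzMap.seminorm ℂ k l (smulLeftCLM F (fun x ↦ χ (ε⁻¹ • x)) f) ≤ C * ε := by
  set A := SchwartzMap.seminorm ℝ 0 (N + 1) f
  set K : ℕ → ℝ := fun i ↦ SchwartzMap.seminorm ℝ (k + (N + 1 - (l - i))) i χ
  have hA0 : 0 ≤ A := apply_nonneg _ _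
  have hK0 (i : ℕ) : 0 ≤ K i := apply_nonneg _ _
  have hC0 : 0 ≤ ∑ i ∈ Finset.range (l + 1), (l.choose i : ℝ) * K i * A :=
    Finset.sum_nonneg fun i _ ↦ by have := hK0 i; positivity
  refine ⟨∑ i ∈ Finset.range (l + 1), (l.choose i : ℝ) * K i * A, hC0, fun ε hε hε1 ↦ ?_⟩
  refine seminorm_le_bound ℂ k l _ (mul_nonneg hC0 hε.le) fun x ↦ ?_
  have hχ : ContDiff ℝ (⊤ : ℕ∞) (fun x ↦ χ (ε⁻¹ • x)) := (χ.smooth ⊤).comp (contDiff_const_smul ε⁻¹)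
  rw [smulLeftCLM_apply (χ.hasTemperateGrowth_dilation ε⁻¹)]
  calc
    _ ≤ ‖x‖ ^ k * ∑ i ∈ Finset.range (l + 1), (l.choose i : ℝ) *
        ‖iteratedFDeriv ℝ i (fun x ↦ χ (ε⁻¹ • x)) x‖ * ‖iteratedFDeriv ℝ (l - i) f x‖ := by
      gcongr
      exact norm_iteratedFDeriv_smul_le hχ (f.smooth ⊤) x (mod_cast le_top)
    _ ≤ ∑ i ∈ Finset.range (l + 1), (l.choose i : ℝ) * K i * A * ε := by
      rw [Finset.mul_sum]
      refine Finset.sum_le_sum fun i hi ↦ ?_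
      have hi' : i ≤ l := by simpa [Nat.lt_succ_iff] using hi
      set y := ε⁻¹ • x with hy
      have hx : ‖x‖ = ε * ‖y‖ := by
        rw [hy, norm_smul, norm_inv, Real.norm_of_nonneg hε.le, mul_inv_cancel_left₀ hε.ne']
      have h1 : ‖iteratedFDeriv ℝ i (fun x ↦ χ (ε⁻¹ • x)) x‖ =
          (ε ^ i)⁻¹ * ‖iteratedFDeriv ℝ i χ y‖ := by
        rw [iteratedFDeriv_comp_const_smul _ (χ.smooth i), norm_smul, norm_pow, norm_inv,
          Real.norm_of_nonneg hε.le, inv_pow]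
      have h2 := f.norm_iteratedFDeriv_le_of_flat hf
        (show l - i + (N + 1 - (l - i)) = N + 1 by omega) x
      have h3 := χ.le_seminorm ℝ (k + (N + 1 - (l - i))) i y
      have h4 : (ε ^ i)⁻¹ * ε ^ (k + (N + 1 - (l - i))) ≤ ε := by
        have : k + (N + 1 - (l - i)) = i + ((k + N - l) + 1) := by omega
        rw [this, pow_add, inv_mul_cancel_left₀ (by positivity), pow_succ]
        exact mul_le_of_le_one_left hε.le (pow_le_one₀ hε.le hε1)
      rw [h1]
      calc
        _ ≤ ‖x‖ ^ k * ((l.choose i : ℝ) * ((ε ^ i)⁻¹ * ‖iteratedFDeriv ℝ i χ y‖) *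
            (A * ‖x‖ ^ (N + 1 - (l - i)))) := by gcongr
        _ = (l.choose i : ℝ) * (‖y‖ ^ (k + (N + 1 - (l - i))) * ‖iteratedFDeriv ℝ i χ y‖) * A *
            ((ε ^ i)⁻¹ * ε ^ (k + (N + 1 - (l - i)))) := by
          rw [hx, mul_pow, mul_pow, pow_add, pow_add]; ring
        _ ≤ _ := by gcongr
    _ = _ := by rw [Finset.sum_mul]

/-- A continuous functional on Schwartz space that is supported at the origin has finite order:
it kills every function that is flat to a sufficiently high order there. -/
theorem exists_order_of_supported_zero [FiniteDimensional ℝ E] (G : 𝓢(E, F) →L[ℂ] ℂ)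
    (hG : ∀ f : 𝓢(E, F), f =ᶠ[𝓝 0] 0 → G f = 0) :
    ∃ N : ℕ, ∀ f : 𝓢(E, F), (∀ j ≤ N, iteratedFDeriv ℝ j f 0 = 0) → G f = 0 := by
  obtain ⟨s, C, -, hC⟩ := Seminorm.bound_of_continuous (schwartz_withSeminorms ℂ E F)
    ((normSeminorm ℂ ℂ).comp G.toLinearMap) (continuous_norm.comp G.continuous)
  refine ⟨s.sup Prod.snd, fun f hf ↦ ?_⟩
  let b : ContDiffBump (0 : E) := ⟨1, 2, one_pos, one_lt_two⟩
  have hbc : HasCompactSupport (fun x ↦ (b x : ℂ)) :=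
    b.hasCompactSupport.comp_left Complex.ofReal_zero
  let χ : 𝓢(E, ℂ) := hbc.toSchwartzMap (Complex.ofRealCLM.contDiff.comp b.contDiff)
  have hχ1 : ∀ x ∈ Metric.closedBall (0 : E) 1, χ x = 1 := fun x hx ↦ by
    change (b x : ℂ) = 1
    rw [b.one_of_mem_closedBall hx, Complex.ofReal_one]
  have key : ∀ m ∈ s, ∃ B : ℝ, 0 ≤ B ∧ ∀ ε : ℝ, 0 < ε → ε ≤ 1 →
      schwartzSeminormFamily ℂ E F m (smulLeftCLM F (fun x ↦ χ (ε⁻¹ • x)) f) ≤ B * ε :=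
    fun m hm ↦ exists_seminorm_dilation_smul_le χ f hf m.1 (Finset.le_sup (f := Prod.snd) hm)
  choose! B hB0 hB using key
  have hle : ∀ ε : ℝ, 0 < ε → ε ≤ 1 → ‖G f‖ ≤ C * (∑ m ∈ s, B m) * ε := by
    intro ε hε hε1
    set g := smulLeftCLM F (fun x ↦ χ (ε⁻¹ • x)) f with hg
    have hflat : G (f - g) = 0 := by
      refine hG _ ?_
      filter_upwards [Metric.closedBall_mem_nhds (0 : E) hε] with x hx
      have hx' : χ (ε⁻¹ • x) = 1 := by
        apply hχ1
        rw [mem_closedBall_zero_iff] at hx ⊢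
        rw [norm_smul, norm_inv, Real.norm_of_nonneg hε.le, inv_mul_le_iff₀ hε]
        simpa using hx
      simp [hg, smulLeftCLM_apply_apply (χ.hasTemperateGrowth_dilation ε⁻¹), hx']
    have hfg : G f = G g := by rwa [map_sub, sub_eq_zero] at hflat
    have h1 : ‖G g‖ ≤ C * s.sup (schwartzSeminormFamily ℂ E F) g := hC g
    have hS : 0 ≤ (∑ m ∈ s, B m) * ε := mul_nonneg (Finset.sum_nonneg hB0) hε.le
    rw [hfg, mul_assoc]
    refine h1.trans ?_
    gcongr
    refine Seminorm.finset_sup_apply_le hS fun m hm ↦ (hB m hm ε hε hε1).trans ?_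
    gcongr
    exact Finset.single_le_sum hB0 hm
  have hlim : Filter.Tendsto (fun ε : ℝ ↦ C * (∑ m ∈ s, B m) * ε) (𝓝[>] 0) (𝓝 0) := by
    have : Continuous (fun ε : ℝ ↦ C * (∑ m ∈ s, B m) * ε) := by fun_prop
    simpa using (this.tendsto 0).mono_left nhdsWithin_le_nhds
  have : ‖G f‖ ≤ 0 := ge_of_tendsto hlim <| by
    filter_upwards [Ioc_mem_nhdsGT one_pos] with ε hε using hle ε hε.1 hε.2
  simpa using this

end Flat

section Polynomial

variable {n : ℕ}

theorem hasTemperateGrowth_mvPolynomial (p : MvPolynomial (Fin n) ℂ) :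
    (fun x : EuclideanSpace ℝ (Fin n) ↦
      MvPolynomial.eval (fun i ↦ (x i : ℂ)) p).HasTemperateGrowth := by
  induction p using MvPolynomial.induction_on with
  | C a => simp
  | add p q hp hq => simpa using! hp.add hq
  | mul_X p i hp =>
    have := hp.mul (Complex.ofRealCLM ∘L
      (EuclideanSpace.proj i : EuclideanSpace ℝ (Fin n) →L[ℝ] ℝ)).hasTemperateGrowth
    simpa using! this

/-- Multiplication of Schwartz functions by a polynomial. -/
noncomputable def polynomialMul (p : MvPolynomial (Fin n) ℂ) :
    𝓢(EuclideanSpace ℝ (Fin n), ℂ) →L[ℂ] 𝓢(EuclideanSpace ℝ (Fin n), ℂ) :=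
  smulLeftCLM ℂ (fun x ↦ MvPolynomial.eval (fun i ↦ (x i : ℂ)) p)

@[simp]
theorem polynomialMul_apply (p : MvPolynomial (Fin n) ℂ)
    (f : 𝓢(EuclideanSpace ℝ (Fin n), ℂ)) (x : EuclideanSpace ℝ (Fin n)) :
    polynomialMul p f x = MvPolynomial.eval (fun i ↦ (x i : ℂ)) p * f x := by
  simp [polynomialMul, smulLeftCLM_apply_apply (hasTemperateGrowth_mvPolynomial p)]

theorem polynomialMul_mul (p q : MvPolynomial (Fin n) ℂ)
    (f : 𝓢(EuclideanSpace ℝ (Fin n), ℂ)) :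
    polynomialMul (p * q) f = polynomialMul p (polynomialMul q f) := by
  ext x; simp [mul_assoc]

/-- The tempered distribution given by integration against a polynomial. -/
noncomputable def polynomialIntegral :
    MvPolynomial (Fin n) ℂ →ₗ[ℂ] 𝓢(EuclideanSpace ℝ (Fin n), ℂ) →ₗ[ℂ] ℂ where
  toFun p := (integralCLM ℂ volume ∘L polynomialMul p).toLinearMap
  map_add' p q := by
    ext f
    have : polynomialMul (p + q) f = polynomialMul p f + polynomialMul q f := by
      ext x; simp [add_mul]
    change integralCLM ℂ volume (polynomialMul (p + q) f) = _
    rw [this, map_add]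
    rfl
  map_smul' c p := by
    ext f
    have : polynomialMul (c • p) f = c • polynomialMul p f := by
      ext x; simp [mul_assoc]
    change integralCLM ℂ volume (polynomialMul (c • p) f) = _
    rw [this, map_smul]
    rfl

theorem polynomialIntegral_eq_integral (p : MvPolynomial (Fin n) ℂ)
    (f : 𝓢(EuclideanSpace ℝ (Fin n), ℂ)) :
    polynomialIntegral p f =
      ∫ x : EuclideanSpace ℝ (Fin n), MvPolynomial.eval (fun i ↦ (x i : ℂ)) p * f x := by
  simp [polynomialIntegral, integralCLM_apply]

theorem polynomialIntegral_eq_fourier (p : MvPolynomial (Fin n) ℂ)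
    (f : 𝓢(EuclideanSpace ℝ (Fin n), ℂ)) :
    polynomialIntegral p f = 𝓕 (polynomialMul p f) 0 := by
  simp [polynomialIntegral, integralCLM_apply, fourier_coe, Real.fourier_eq]

theorem lineDerivOp_single_fourier (f : 𝓢(EuclideanSpace ℝ (Fin n), ℂ)) (i : Fin n) :
    ∂_{EuclideanSpace.single i (1 : ℝ)} (𝓕 f) =
      (-(2 * Real.pi * Complex.I)) • 𝓕 (polynomialMul (MvPolynomial.X i) f) := by
  rw [lineDerivOp_fourier_eq, FourierTransform.fourier_smul]
  congr 2
  ext x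
  have : (inner ℝ · (EuclideanSpace.single i (1 : ℝ))).HasTemperateGrowth := by fun_prop
  rw [smulLeftCLM_apply_apply this]
  simp [EuclideanSpace.inner_single_right]

theorem iteratedLineDerivOp_single_fourier (f : 𝓢(EuclideanSpace ℝ (Fin n), ℂ)) {j : ℕ}
    (s : Fin j → Fin n) :
    ∂^{fun k ↦ EuclideanSpace.single (s k) (1 : ℝ)} (𝓕 f) =
      (-(2 * Real.pi * Complex.I)) ^ j •
        𝓕 (polynomialMul (∏ k, MvPolynomial.X (s k)) f) := by
  induction j with
  | zero =>
    have : polynomialMul 1 f = f := by ext x; simp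
    simp [this]
  | succ j ih =>
    rw [LineDeriv.iteratedLineDerivOp_succ_left]
    have := ih (Fin.tail s)
    simp only [Fin.tail_def] at this ⊢
    rw [this, LineDeriv.lineDerivOp_smul, lineDerivOp_single_fourier, smul_smul,
      ← polynomialMul_mul, Fin.prod_univ_succ, pow_succ]

/-- If all moments of order `j` of a Schwartz function vanish, then so does the `j`-th derivative of
its Fourier transform at the origin. -/
theorem iteratedFDeriv_fourier_zero_eq_zero (f : 𝓢(EuclideanSpace ℝ (Fin n), ℂ)) (j : ℕ)
    (hf : ∀ s : Fin j → Fin n, polynomialIntegral (∏ k, MvPolynomial.X (s k)) f = 0) :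
    iteratedFDeriv ℝ j (𝓕 f : 𝓢(EuclideanSpace ℝ (Fin n), ℂ)) 0 = 0 := by
  apply ContinuousMultilinearMap.toMultilinearMap_injective
  refine Module.Basis.ext_multilinear
    (fun _ ↦ (EuclideanSpace.basisFun (Fin n) ℝ).toBasis) fun s ↦ ?_
  have h := congrArg (fun g : 𝓢(EuclideanSpace ℝ (Fin n), ℂ) ↦ g 0)
    (iteratedLineDerivOp_single_fourier f s)
  simp only [iteratedLineDerivOp_eq_iteratedFDeriv, smul_apply,
    ← polynomialIntegral_eq_fourier, hf, smul_zero] at h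
  simpa using h

theorem fourier_polynomialMul_eventuallyEq_zero (p : MvPolynomial (Fin n) ℂ)
    {f : 𝓢(EuclideanSpace ℝ (Fin n), ℂ)} (hf : (𝓕 f : 𝓢(EuclideanSpace ℝ (Fin n), ℂ)) =ᶠ[𝓝 0] 0) :
    (𝓕 (polynomialMul p f) : 𝓢(EuclideanSpace ℝ (Fin n), ℂ)) =ᶠ[𝓝 0] 0 := by
  induction p using MvPolynomial.induction_on generalizing f with
  | C a =>
    have : polynomialMul (MvPolynomial.C a) f = a • f := by ext x; simp
    rw [this, FourierTransform.fourier_smul]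
    filter_upwards [hf] with x hx
    simp [hx]
  | add p q hp hq =>
    have : polynomialMul (p + q) f = polynomialMul p f + polynomialMul q f := by
      ext x; simp [add_mul]
    rw [this, FourierTransform.fourier_add]
    filter_upwards [hp hf, hq hf] with x hx hx'
    simp [hx, hx']
  | mul_X p i hp =>
    rw [polynomialMul_mul]
    apply hp
    have hc : -(2 * Real.pi * Complex.I) ≠ 0 := by simp [Real.pi_ne_zero]
    filter_upwards [hf.fderiv (𝕜 := ℝ)] with x hx
    have h := congrArg (fun g : 𝓢(EuclideanSpace ℝ (Fin n), ℂ) ↦ g x)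
      (lineDerivOp_single_fourier f i)
    simp only [lineDerivOp_apply_eq_fderiv, smul_apply, hx] at h
    simpa [hc] using h

/-- The annihilator of the Schwartz functions with vanishing moments consists of polynomials. -/
theorem exists_polynomialIntegral_eq (G : 𝓢(EuclideanSpace ℝ (Fin n), ℂ) →L[ℂ] ℂ)
    (hG : ∀ f, (∀ p, polynomialIntegral p f = 0) → G f = 0) :
    ∃ p, polynomialIntegral p = G.toLinearMap := by
  obtain ⟨N, hN⟩ := exists_order_of_supported_zero
    (G ∘L (FourierTransform.fourierCLE ℂ 𝓢(EuclideanSpace ℝ (Fin n), ℂ)).symm.toContinuousLinearMap)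
    (fun f hf ↦ hG _ fun p ↦ by
      rw [polynomialIntegral_eq_fourier]
      refine (fourier_polynomialMul_eventuallyEq_zero p ?_).self_of_nhds
      simpa using hf)
  let L (s : Σ j : Fin (N + 1), Fin j → Fin n) : 𝓢(EuclideanSpace ℝ (Fin n), ℂ) →ₗ[ℂ] ℂ :=
    polynomialIntegral (∏ k, MvPolynomial.X (s.2 k))
  have hmem : G.toLinearMap ∈ Submodule.span ℂ (Set.range L) := by
    refine mem_span_of_iInf_ker_le_ker fun f hf ↦ ?_
    have hf' : ∀ s, L s f = 0 := by simpa using hf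
    have := hN (𝓕 f) fun j hj ↦ iteratedFDeriv_fourier_zero_eq_zero f j fun s ↦
      hf' ⟨⟨j, Nat.lt_succ_of_le hj⟩, s⟩
    simpa using this
  have hle : Submodule.span ℂ (Set.range L) ≤ LinearMap.range (polynomialIntegral (n := n)) := by
    rw [Submodule.span_le]
    rintro _ ⟨s, rfl⟩
    exact ⟨_, rfl⟩
  exact hle hmem

end Polynomial

end SchwartzMap

/-- the set of polynomial tempered distributions (polynomials regarded as
elements of `𝒮′(ℝⁿ)` via integration against Schwartz functions) is a closed linear
subspace of `𝒮′(ℝⁿ)` with the weak-* topology. -/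
theorem polynomial_distributions_closed_subspace (n : ℕ) :
    ∃ P : Submodule ℂ (WeakDual ℂ (SchwartzMap (EuclideanSpace ℝ (Fin n)) ℂ)),
      (P : Set (WeakDual ℂ (SchwartzMap (EuclideanSpace ℝ (Fin n)) ℂ))) =
        {F | ∃ p : MvPolynomial (Fin n) ℂ,
          ∀ φ : SchwartzMap (EuclideanSpace ℝ (Fin n)) ℂ,
            F φ = ∫ x : EuclideanSpace ℝ (Fin n),
              MvPolynomial.eval (fun i => (x i : ℂ)) p * φ x} ∧
      IsClosed (P : Set (WeakDual ℂ (SchwartzMap (EuclideanSpace ℝ (Fin n)) ℂ))) := by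
  let P : Submodule ℂ (WeakDual ℂ (SchwartzMap (EuclideanSpace ℝ (Fin n)) ℂ)) :=
    { carrier := {F | ∀ φ, (∀ p, SchwartzMap.polynomialIntegral p φ = 0) → F φ = 0}
      add_mem' := fun {F G} hF hG φ hφ ↦ by
        change F φ + G φ = 0
        rw [hF φ hφ, hG φ hφ, add_zero]
      zero_mem' := fun _ _ ↦ rfl
      smul_mem' := fun c F hF φ hφ ↦ by
        change c • F φ = 0
        rw [hF φ hφ, smul_zero] }
  refine ⟨P, ?_, ?_⟩
  · ext F
    simp only [← SchwartzMap.polynomialIntegral_eq_integral]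
    constructor
    · intro hF
      obtain ⟨p, hp⟩ := SchwartzMap.exists_polynomialIntegral_eq (WeakDual.toStrongDual F) hF
      exact ⟨p, fun φ ↦ (LinearMap.congr_fun hp φ).symm⟩
    · rintro ⟨p, hp⟩ φ hφ
      rw [hp, hφ]
  · have : (P : Set (WeakDual ℂ (SchwartzMap (EuclideanSpace ℝ (Fin n)) ℂ))) =
        ⋂ φ, ⋂ (_ : ∀ p, SchwartzMap.polynomialIntegral p φ = 0), {F | F φ = 0} := by
      ext F
      simp only [Set.mem_iInter, Set.mem_ofPred_eq]
      rfl
    rw [this]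
    exact isClosed_iInter fun φ ↦ isClosed_iInter fun _ ↦
      isClosed_eq (WeakDual.eval_continuous φ) continuous_const
end

section
/- A tempered distribution f ∈ 𝒮′(ℝⁿ) vanishes on the Lizorkin space 𝒮_∞(ℝⁿ) (i.e., ⟨f, φ⟩ = 0 for every φ ∈ 𝒮(ℝⁿ) all of whose moments ∫_{ℝⁿ} x^α φ(x) dx vanish) if and only if f is a polynomial, i.e., there is a polynomial p on ℝⁿ with ⟨f, φ⟩ = ∫_{ℝⁿ} p(x) φ(x) dx for all φ ∈ 𝒮(ℝⁿ). -/
open MeasureTheory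

open scoped FourierTransform SchwartzMap ContDiff Topology

section FlatCutoff

variable {E : Type*} [NormedAddCommGroup E] [NormedSpace ℝ E]

/-- Taylor estimate for a Schwartz function all of whose derivatives of order at most `N` vanish at
the origin. -/
theorem SchwartzMap.exists_norm_iteratedFDeriv_le_pow (ψ : 𝓢(E, ℂ)) {N : ℕ}
    (hψ : ∀ l ≤ N, iteratedFDeriv ℝ l ψ 0 = 0) {m r : ℕ} (hmr : m + r = N + 1) :
    ∃ C, 0 ≤ C ∧ ∀ x, ‖iteratedFDeriv ℝ m ψ x‖ ≤ C * ‖x‖ ^ r := by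
  induction r generalizing m with
  | zero =>
    obtain ⟨C, hC, h⟩ := ψ.decay 0 m
    exact ⟨C, hC.le, fun x => by simpa using h x⟩
  | succ r ih =>
    obtain ⟨C, hC, h⟩ := ih (m := m + 1) (by omega)
    refine ⟨C, hC, fun x => ?_⟩
    have hd : Differentiable ℝ (iteratedFDeriv ℝ m ψ) :=
      (ψ.smooth (m + 1 : ℕ)).differentiable_iteratedFDeriv (by exact_mod_cast Nat.lt_succ_self m)
    have key := (convex_closedBall (0 : E) ‖x‖).norm_image_sub_le_of_norm_fderiv_le
      (𝕜 := ℝ) (f := iteratedFDeriv ℝ m ψ) (C := C * ‖x‖ ^ r) (x := 0) (y := x)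
      (fun y _ => hd y) (fun y hy => ?_) (by simp) (by simp)
    · rw [hψ m (by omega), sub_zero, sub_zero] at key
      rwa [pow_succ, ← mul_assoc]
    · rw [norm_fderiv_iteratedFDeriv]
      refine (h y).trans ?_
      gcongr
      simpa using hy

/-- Multiplying a Schwartz function which is flat to order `N` at the origin by the rescaled cutoffs
`χ (ε⁻¹ • ·)` gives `O(ε)` in each Schwartz seminorm with at most `N` derivatives. -/
theorem SchwartzMap.exists_seminorm_le_of_flat (χ : 𝓢(E, ℝ)) (ψ : 𝓢(E, ℂ)) {N : ℕ}
    (hψ : ∀ l ≤ N, iteratedFDeriv ℝ l ψ 0 = 0) (k : ℕ) {l : ℕ} (hl : l ≤ N) :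
    ∃ K, ∀ ε : ℝ, 0 < ε → ε ≤ 1 → ∀ η : 𝓢(E, ℂ), (∀ x, η x = χ (ε⁻¹ • x) • ψ x) →
      SchwartzMap.seminorm ℂ k l η ≤ K * ε := by
  have hT : ∀ j, ∃ C, 0 ≤ C ∧ (j ≤ l → ∀ x,
      ‖iteratedFDeriv ℝ (l - j) ψ x‖ ≤ C * ‖x‖ ^ (N + 1 - (l - j))) := by
    intro j
    obtain ⟨C, hC, h⟩ := ψ.exists_norm_iteratedFDeriv_le_pow hψ
      (m := l - j) (r := N + 1 - (l - j)) (by omega)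
    exact ⟨C, hC, fun _ => h⟩
  choose C hC hCb using hT
  choose D hD hDb using fun j => χ.decay (k + (N + 1 - (l - j))) j
  refine ⟨∑ j ∈ Finset.range (l + 1), (l.choose j : ℝ) * C j * D j, fun ε hε hε1 η hη => ?_⟩
  have hK : 0 ≤ ∑ j ∈ Finset.range (l + 1), (l.choose j : ℝ) * C j * D j :=
    Finset.sum_nonneg fun j _ => mul_nonneg (mul_nonneg (by positivity) (hC j)) (hD j).le
  refine η.seminorm_le_bound ℂ k l (by positivity) fun x => ?_
  have hηf : (η : E → ℂ) = fun x => χ (ε⁻¹ • x) • ψ x := funext hη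
  rw [hηf]
  have hsm : ContDiff ℝ l fun x => χ (ε⁻¹ • x) :=
    (χ.smooth l).comp (contDiff_const_smul ε⁻¹)
  refine (mul_le_mul_of_nonneg_left (norm_iteratedFDeriv_smul_le hsm (ψ.smooth l) x le_rfl)
    (by positivity)).trans ?_
  rw [Finset.mul_sum, Finset.sum_mul]
  refine Finset.sum_le_sum fun j hj => ?_
  have hjl : j ≤ l := Nat.lt_succ_iff.mp (Finset.mem_range.mp hj)
  rw [iteratedFDeriv_comp_const_smul _ (χ.smooth j), norm_smul, norm_pow, norm_inv,
    Real.norm_of_nonneg hε.le]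
  set y := ε⁻¹ • x with hy
  have hx : ‖x‖ = ε * ‖y‖ := by
    rw [hy, norm_smul, norm_inv, Real.norm_of_nonneg hε.le, mul_inv_cancel_left₀ hε.ne']
  have hCx := hCb j hjl x
  have hDy := hDb j y
  obtain ⟨r, hr⟩ : ∃ r, k + (N + 1 - (l - j)) = j + (r + 1) := ⟨k + (N - l), by omega⟩
  have hCj := hC j
  have hε' : ε ^ (r + 1) ≤ ε := pow_le_of_le_one hε.le hε1 (by omega)
  calc ‖x‖ ^ k * ((l.choose j : ℝ) * (ε⁻¹ ^ j * ‖iteratedFDeriv ℝ j χ y‖)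
        * ‖iteratedFDeriv ℝ (l - j) ψ x‖)
      ≤ ‖x‖ ^ k * ((l.choose j : ℝ) * (ε⁻¹ ^ j * ‖iteratedFDeriv ℝ j χ y‖)
        * (C j * ‖x‖ ^ (N + 1 - (l - j)))) := by gcongr
    _ = (l.choose j : ℝ) * C j * (ε⁻¹ ^ j * ‖x‖ ^ (k + (N + 1 - (l - j)))
        * ‖iteratedFDeriv ℝ j χ y‖) := by rw [pow_add ‖x‖]; ring
    _ = (l.choose j : ℝ) * C j * (‖y‖ ^ (k + (N + 1 - (l - j)))
        * ‖iteratedFDeriv ℝ j χ y‖) * ε ^ (r + 1) := by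
      rw [hx, mul_pow, hr, pow_add ε, inv_pow]
      field_simp
    _ ≤ (l.choose j : ℝ) * C j * D j * ε := by
      gcongr
      exact mul_nonneg (mul_nonneg (by positivity) hCj) (hD j).le

/-- A continuous functional on the Schwartz space which annihilates all functions vanishing near
the origin annihilates all functions that are flat to some finite order at the origin. -/
theorem SchwartzMap.exists_order_forall_flat_eq_zero [FiniteDimensional ℝ E] (G : 𝓢(E, ℂ) →L[ℂ] ℂ)
    (hG : ∀ ψ : 𝓢(E, ℂ), (ψ : E → ℂ) =ᶠ[𝓝 0] 0 → G ψ = 0) :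
    ∃ N : ℕ, ∀ ψ : 𝓢(E, ℂ), (∀ l ≤ N, iteratedFDeriv ℝ l ψ 0 = 0) → G ψ = 0 := by
  obtain ⟨s, C, -, hC⟩ := Seminorm.bound_of_continuous (schwartz_withSeminorms ℂ E ℂ)
    ((normSeminorm ℂ ℂ).comp (G : 𝓢(E, ℂ) →ₗ[ℂ] ℂ)) (G.continuous.norm)
  refine ⟨s.sup Prod.snd, fun ψ hψ => ?_⟩
  let b : ContDiffBump (0 : E) := ⟨1, 2, one_pos, one_lt_two⟩
  let χ : 𝓢(E, ℝ) := b.hasCompactSupport.toSchwartzMap b.contDiff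
  have hex : ∀ i : ℕ × ℕ, ∃ K, i ∈ s → ∀ ε : ℝ, 0 < ε → ε ≤ 1 → ∀ η : 𝓢(E, ℂ),
      (∀ x, η x = χ (ε⁻¹ • x) • ψ x) → SchwartzMap.seminorm ℂ i.1 i.2 η ≤ K * ε := by
    intro i
    by_cases hi : i ∈ s
    · obtain ⟨K, hK⟩ := SchwartzMap.exists_seminorm_le_of_flat χ ψ hψ i.1
        (Finset.le_sup (f := Prod.snd) hi)
      exact ⟨K, fun _ => hK⟩
    · exact ⟨0, fun h => absurd h hi⟩
  choose K hK using hex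
  have hbound : ∀ ε : ℝ, 0 < ε → ε ≤ 1 → ‖G ψ‖ ≤ C * (∑ i ∈ s, K i) * ε := by
    intro ε hε hε1
    have hg : (fun x : E => χ (ε⁻¹ • x)).HasTemperateGrowth :=
      χ.hasTemperateGrowth.comp
        ((ε⁻¹ • ContinuousLinearMap.id ℝ E).hasTemperateGrowth)
    let η : 𝓢(E, ℂ) := SchwartzMap.smulLeftCLM ℂ (fun x : E => χ (ε⁻¹ • x)) ψ
    have hη : ∀ x, η x = χ (ε⁻¹ • x) • ψ x := fun x =>
      SchwartzMap.smulLeftCLM_apply_apply hg ψ x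
    have hnear : ((ψ - η : 𝓢(E, ℂ)) : E → ℂ) =ᶠ[𝓝 0] 0 := by
      filter_upwards [Metric.ball_mem_nhds (0 : E) hε] with x hx
      have h1 : χ (ε⁻¹ • x) = 1 := by
        refine b.one_of_mem_closedBall ?_
        rw [mem_closedBall_zero_iff, norm_smul, norm_inv, Real.norm_of_nonneg hε.le,
          inv_mul_le_iff₀ hε]
        simpa [b] using (mem_ball_zero_iff.mp hx).le
      simp [hη, h1]
    have hGη : G ψ = G η := by
      rw [← sub_eq_zero, ← map_sub]
      exact hG _ hnear
    have h1 : ‖G η‖ ≤ C * (s.sup (schwartzSeminormFamily ℂ E ℂ)) η := hC η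
    have h2 : (s.sup (schwartzSeminormFamily ℂ E ℂ)) η
        ≤ (∑ i ∈ s, schwartzSeminormFamily ℂ E ℂ i) η :=
      Seminorm.finset_sup_le_sum _ s η
    have h3 : (∑ i ∈ s, schwartzSeminormFamily ℂ E ℂ i) η ≤ (∑ i ∈ s, K i) * ε := by
      rw [← FunLike.coeAddMonoidHom_apply, map_sum, Finset.sum_apply, Finset.sum_mul]
      exact Finset.sum_le_sum fun i hi => hK i hi ε hε hε1 η hη
    rw [hGη, mul_assoc]
    exact h1.trans (mul_le_mul_of_nonneg_left (h2.trans h3) C.2)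
  have hlim : Filter.Tendsto (fun ε : ℝ => C * (∑ i ∈ s, K i) * ε) (𝓝[>] 0) (𝓝 0) := by
    refine Filter.Tendsto.mono_left ?_ nhdsWithin_le_nhds
    simpa using (continuous_const_mul ((C : ℝ) * ∑ i ∈ s, K i)).tendsto 0
  refine norm_le_zero_iff.mp (ge_of_tendsto hlim ?_)
  filter_upwards [Ioc_mem_nhdsGT (zero_lt_one' ℝ)] with ε hε
  exact hbound ε hε.1 hε.2

end FlatCutoff

section Moments

variable {n : ℕ}

theorem MvPolynomial.hasTemperateGrowth_eval (p : MvPolynomial (Fin n) ℂ) :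
    (fun x : EuclideanSpace ℝ (Fin n) =>
      MvPolynomial.eval (fun i => (x i : ℂ)) p).HasTemperateGrowth := by
  induction p using MvPolynomial.induction_on with
  | C a => simp
  | add p q hp hq => simpa only [map_add] using! hp.add hq
  | mul_X p i hp =>
    simpa only [map_mul, MvPolynomial.eval_X] using! hp.mul
      (Complex.ofRealCLM.comp (EuclideanSpace.proj (𝕜 := ℝ) i)).hasTemperateGrowth

theorem MvPolynomial.integrable_eval_mul_schwartz (p : MvPolynomial (Fin n) ℂ)
    (φ : 𝓢(EuclideanSpace ℝ (Fin n), ℂ)) :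
    Integrable fun x : EuclideanSpace ℝ (Fin n) =>
      MvPolynomial.eval (fun i => (x i : ℂ)) p * φ x := by
  refine (SchwartzMap.smulLeftCLM ℂ (fun x : EuclideanSpace ℝ (Fin n) =>
    MvPolynomial.eval (fun i => (x i : ℂ)) p) φ).integrable.congr (.of_forall fun x => ?_)
  simp [SchwartzMap.smulLeftCLM_apply_apply p.hasTemperateGrowth_eval]

/-- Integration of Schwartz functions against a polynomial, linear in both arguments. -/
noncomputable def polynomialPairing (n : ℕ) :
    MvPolynomial (Fin n) ℂ →ₗ[ℂ] 𝓢(EuclideanSpace ℝ (Fin n), ℂ) →ₗ[ℂ] ℂ :=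
  LinearMap.mk₂ ℂ
    (fun p φ => ∫ x : EuclideanSpace ℝ (Fin n), MvPolynomial.eval (fun i => (x i : ℂ)) p * φ x)
    (fun p q φ => by
      simp only [map_add, add_mul]
      exact integral_add (p.integrable_eval_mul_schwartz φ) (q.integrable_eval_mul_schwartz φ))
    (fun c p φ => by
      simp only [MvPolynomial.smul_eval, mul_assoc, smul_eq_mul]
      exact integral_const_mul c _)
    (fun p φ ψ => by
      simp only [add_apply, mul_add]
      exact integral_add (p.integrable_eval_mul_schwartz φ) (p.integrable_eval_mul_schwartz ψ))
    (fun c p φ => by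
      simp only [smul_apply, mul_left_comm _ c, smul_eq_mul]
      exact integral_const_mul c _)

theorem polynomialPairing_apply (p : MvPolynomial (Fin n) ℂ)
    (φ : 𝓢(EuclideanSpace ℝ (Fin n), ℂ)) :
    polynomialPairing n p φ =
      ∫ x : EuclideanSpace ℝ (Fin n), MvPolynomial.eval (fun i => (x i : ℂ)) p * φ x :=
  rfl

/-- The derivatives at the origin of the Fourier transform are moments. -/
theorem iteratedFDeriv_fourier_zero_apply (φ : 𝓢(EuclideanSpace ℝ (Fin n), ℂ)) (l : ℕ)
    (s : Fin l → Fin n) :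
    iteratedFDeriv ℝ l (𝓕 φ : 𝓢(EuclideanSpace ℝ (Fin n), ℂ)) 0
        (fun j => EuclideanSpace.single (s j) 1) =
      (-(2 * Real.pi * Complex.I)) ^ l *
        polynomialPairing n (∏ j, MvPolynomial.X (s j)) φ := by
  have hint : ∀ k : ℕ, Integrable fun v : EuclideanSpace ℝ (Fin n) => ‖v‖ ^ k * ‖φ v‖ :=
    fun k => φ.integrable_pow_mul volume k
  have hmeas : AEStronglyMeasurable φ (volume : Measure (EuclideanSpace ℝ (Fin n))) :=
    φ.continuous.aestronglyMeasurable
  rw [SchwartzMap.fourier_coe, Real.iteratedFDeriv_fourier (N := ⊤) (fun k _ => hint k) hmeas le_top,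
    Real.fourier_eq]
  simp only [inner_zero_right, neg_zero, AddChar.map_zero_eq_one, one_smul]
  rw [ContinuousMultilinearMap.integral_apply
    (VectorFourier.integrable_fourierPowSMulRight _ (hint l) hmeas)]
  simp only [VectorFourier.fourierPowSMulRight_apply, smul_eq_mul]
  rw [integral_const_mul, polynomialPairing_apply]
  simp [innerSL_apply_apply ℝ, EuclideanSpace.inner_single_right]

theorem iteratedFDeriv_fourier_zero_eq_zero_iff (φ : 𝓢(EuclideanSpace ℝ (Fin n), ℂ)) (l : ℕ) :
    iteratedFDeriv ℝ l (𝓕 φ : 𝓢(EuclideanSpace ℝ (Fin n), ℂ)) 0 = 0 ↔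
      ∀ s : Fin l → Fin n, polynomialPairing n (∏ j, MvPolynomial.X (s j)) φ = 0 := by
  have hne : (-(2 * Real.pi * Complex.I)) ^ l ≠ 0 :=
    pow_ne_zero _ (neg_ne_zero.mpr Complex.two_pi_I_ne_zero)
  constructor
  · intro h s
    have := iteratedFDeriv_fourier_zero_apply φ l s
    rw [h, zero_apply] at this
    exact (mul_eq_zero.mp this.symm).resolve_left hne
  · intro h
    apply ContinuousMultilinearMap.toMultilinearMap_injective
    refine Module.Basis.ext_multilinear
      (fun _ => (EuclideanSpace.basisFun (Fin n) ℝ).toBasis) fun s => ?_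
    have := iteratedFDeriv_fourier_zero_apply φ l s
    rw [h, mul_zero] at this
    simpa using this

/-- Every monomial is a finite product of coordinates. -/
theorem exists_prod_coord_eq_prod_pow (α : Fin n → ℕ) :
    ∃ (l : ℕ) (s : Fin l → Fin n), ∀ x : Fin n → ℂ, ∏ j, x (s j) = ∏ i, x i ^ α i := by
  let e := Fintype.equivFin (Σ i : Fin n, Fin (α i))
  refine ⟨_, fun j => (e.symm j).1, fun x => ?_⟩
  rw [Equiv.prod_comp e.symm fun a => x a.1, Fintype.prod_sigma]
  simp

end Moments

/-- a tempered distribution `F` vanishes on the Lizorkin space `𝒮_∞(ℝⁿ)`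
(the Schwartz functions all of whose moments vanish) if and only if `F` is (integration
against) a polynomial. -/
theorem vanishes_on_lizorkin_iff_polynomial (n : ℕ)
    (F : SchwartzMap (EuclideanSpace ℝ (Fin n)) ℂ →L[ℂ] ℂ) :
    (∀ φ : SchwartzMap (EuclideanSpace ℝ (Fin n)) ℂ,
        (∀ α : Fin n → ℕ,
          ∫ x : EuclideanSpace ℝ (Fin n), (∏ i, (x i : ℂ) ^ α i) * φ x = 0) →
        F φ = 0) ↔
      ∃ p : MvPolynomial (Fin n) ℂ,
        ∀ φ : SchwartzMap (EuclideanSpace ℝ (Fin n)) ℂ,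
          F φ = ∫ x : EuclideanSpace ℝ (Fin n),
            MvPolynomial.eval (fun i => (x i : ℂ)) p * φ x := by
  constructor
  · intro hF
    let G : 𝓢(EuclideanSpace ℝ (Fin n), ℂ) →L[ℂ] ℂ :=
      F.comp ((FourierTransform.fourierCLE ℂ 𝓢(EuclideanSpace ℝ (Fin n), ℂ)).symm :
        𝓢(EuclideanSpace ℝ (Fin n), ℂ) →L[ℂ] 𝓢(EuclideanSpace ℝ (Fin n), ℂ))
    have hGF : ∀ φ : 𝓢(EuclideanSpace ℝ (Fin n), ℂ), G (𝓕 φ) = F φ := fun φ =>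
      congrArg F ((FourierTransform.fourierCLE ℂ
        𝓢(EuclideanSpace ℝ (Fin n), ℂ)).symm_apply_apply φ)
    obtain ⟨N, hN⟩ := SchwartzMap.exists_order_forall_flat_eq_zero G (by
      intro ψ hψ
      obtain ⟨φ, rfl⟩ : ∃ φ : 𝓢(EuclideanSpace ℝ (Fin n), ℂ), 𝓕 φ = ψ :=
        (FourierTransform.fourierCLE ℂ 𝓢(EuclideanSpace ℝ (Fin n), ℂ)).surjective ψ
      rw [hGF]
      refine hF φ fun α => ?_
      obtain ⟨l, s, hs⟩ := exists_prod_coord_eq_prod_pow α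
      have h0 : iteratedFDeriv ℝ l (𝓕 φ : 𝓢(EuclideanSpace ℝ (Fin n), ℂ)) 0 = 0 := by
        rw [(hψ.iteratedFDeriv ℝ l).eq_of_nhds]
        simp
      have := (iteratedFDeriv_fourier_zero_eq_zero_iff φ l).mp h0 s
      simpa [polynomialPairing_apply, ← hs] using this)
    let L : (Σ l : Fin (N + 1), Fin l → Fin n) → 𝓢(EuclideanSpace ℝ (Fin n), ℂ) →ₗ[ℂ] ℂ :=
      fun a => polynomialPairing n (∏ j, MvPolynomial.X (a.2 j))
    have hspan : (F : 𝓢(EuclideanSpace ℝ (Fin n), ℂ) →ₗ[ℂ] ℂ) ∈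
        Submodule.span ℂ (Set.range L) := by
      refine mem_span_of_iInf_ker_le_ker fun φ hφ => ?_
      rw [LinearMap.mem_ker, ContinuousLinearMap.coe_coe, ← hGF]
      refine hN _ fun l hl => (iteratedFDeriv_fourier_zero_eq_zero_iff φ l).mpr fun s => ?_
      exact (Submodule.mem_iInf _).mp hφ ⟨⟨l, Nat.lt_succ_of_le hl⟩, s⟩
    have hle : Submodule.span ℂ (Set.range L) ≤ LinearMap.range (polynomialPairing n) := by
      rw [Submodule.span_le]
      rintro _ ⟨a, rfl⟩
      exact ⟨_, rfl⟩
    obtain ⟨p, hp⟩ := hle hspan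
    exact ⟨p, fun φ => (LinearMap.congr_fun hp φ).symm⟩
  · rintro ⟨p, hp⟩ φ hφ
    rw [hp, ← polynomialPairing_apply]
    clear hp
    induction p using MvPolynomial.induction_on' with
    | monomial u a =>
      simp only [polynomialPairing_apply, MvPolynomial.eval_monomial, mul_assoc]
      rw [integral_const_mul]
      simp [Finsupp.prod_fintype, hφ]
    | add p q hp hq => rw [map_add, LinearMap.add_apply, hp, hq, add_zero]
end
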